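/- For every pair of unit vectors w and w' in ℝ⁴ there exist angles θ₀, θ₁, θ₂, θ₃ ∈ ℝ such that (R_y(θ₃) ⊗ R_y(θ₂)) · CZ · (R_y(θ₁) ⊗ R_y(θ₀)) w = w'. (Any two two-qubit states with real amplitudes can be connected by a circuit consisting of single-qubit R_y gates and exactly one controlled-Z gate.) -/

import Mathlib

/-!
Write `w` as the pair of complex numbers
`z₁ = (w 0 - w 3) + i (w 1 + w 2)` and `z₂ = (w 0 + w 3) + i (w 2 - w 1)`.
The gate `R_y(2a) ⊗ R_y(2b)` multiplies `z₁` by `e^{i(a+b)}` and `z₂` by `e^{i(a-b)}`, so two vectors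
are related by local rotations exactly when they have the same `|z₁|` and the same `|z₂|`
(`exists_local_rotation`). For unit vectors `|z₁|² + |z₂|² = 2`. The gate `CZ` exchanges the real
parts of `z₁` and `z₂`.

Let `|z₁'|² = 2t` for the target vector. Rotate the source so that
`z₁ = |z₁| (√(1-t) + i √t)` and `z₂ = |z₂| (√t + i √(1-t))`. After `CZ`, the first coordinate has
squared modulus `|z₂|² t + |z₁|² t = 2t` and the second `2(1-t)`, which are those of the target,
so a second local rotation finishes.
-/

open Matrix Real

/-- Kronecker product of two `2 × 2` real matrices, as a `4 × 4` real matrix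
acting on amplitude vectors `(w₁,w₂,w₃,w₄)` of two-qubit states. -/
noncomputable def kron (A B : Matrix (Fin 2) (Fin 2) ℝ) : Matrix (Fin 4) (Fin 4) ℝ :=
  Matrix.of fun i j =>
    A ⟨i.val / 2, by omega⟩ ⟨j.val / 2, by omega⟩ *
    B ⟨i.val % 2, by omega⟩ ⟨j.val % 2, by omega⟩

/-- The single-qubit rotation gate `R_y(θ)`. -/
noncomputable def Ry (θ : ℝ) : Matrix (Fin 2) (Fin 2) ℝ :=
  !![Real.cos (θ / 2), -Real.sin (θ / 2); Real.sin (θ / 2), Real.cos (θ / 2)]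

/-- The controlled-Z gate `CZ = diag(1,1,1,-1)`. -/
def CZ : Matrix (Fin 4) (Fin 4) ℝ :=
  !![1, 0, 0, 0; 0, 1, 0, 0; 0, 0, 1, 0; 0, 0, 0, -1]

lemma exists_rotation (x y x' y' : ℝ) (h : x ^ 2 + y ^ 2 = x' ^ 2 + y' ^ 2) :
    ∃ α : ℝ, Real.cos α * x - Real.sin α * y = x' ∧ Real.sin α * x + Real.cos α * y = y' := by
  by_cases h0 : x ^ 2 + y ^ 2 = 0
  · have hx : x = 0 := by nlinarith [sq_nonneg x, sq_nonneg y]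
    have hy : y = 0 := by nlinarith [sq_nonneg x, sq_nonneg y]
    have hx' : x' = 0 := by nlinarith [sq_nonneg x', sq_nonneg y']
    have hy' : y' = 0 := by nlinarith [sq_nonneg x', sq_nonneg y']
    exact ⟨0, by simp [hx, hx'], by simp [hy, hy']⟩
  · -- `α` is the argument of `z' / z`, where `z = x + iy` and `z' = x' + iy'`.
    have hn : ‖(⟨(x * x' + y * y') / (x ^ 2 + y ^ 2),
        (x * y' - y * x') / (x ^ 2 + y ^ 2)⟩ : ℂ)‖ = 1 := by
      rw [← sq_eq_sq₀ (norm_nonneg _) zero_le_one, Complex.sq_norm, Complex.normSq_mk]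
      field_simp
      linear_combination -(x ^ 2 + y ^ 2) * h
    obtain ⟨α, hα⟩ := Complex.norm_eq_one_iff _ |>.1 hn
    have hc := congrArg Complex.re hα
    have hs := congrArg Complex.im hα
    rw [Complex.exp_ofReal_mul_I_re] at hc
    rw [Complex.exp_ofReal_mul_I_im] at hs
    refine ⟨α, ?_, ?_⟩
    · rw [hc, hs]; field_simp; ring
    · rw [hc, hs]; field_simp; ring

/-- Equality of `|z₁|²` and `|z₂|²` suffices for two vectors to differ by a local rotation. -/
lemma exists_local_rotation (u v : Fin 4 → ℝ)
    (h₁ : (u 0 - u 3) ^ 2 + (u 1 + u 2) ^ 2 = (v 0 - v 3) ^ 2 + (v 1 + v 2) ^ 2)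
    (h₂ : (u 0 + u 3) ^ 2 + (u 2 - u 1) ^ 2 = (v 0 + v 3) ^ 2 + (v 2 - v 1) ^ 2) :
    ∃ θ₀ θ₁ : ℝ, (kron (Ry θ₁) (Ry θ₀)).mulVec u = v := by
  obtain ⟨α, hα₁, hα₂⟩ := exists_rotation _ _ _ _ h₁
  obtain ⟨β, hβ₁, hβ₂⟩ := exists_rotation _ _ _ _ h₂
  obtain ⟨a, b, rfl, rfl⟩ : ∃ a b : ℝ, α = a + b ∧ β = a - b :=
    ⟨(α + β) / 2, (α - β) / 2, by ring, by ring⟩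
  rw [Real.cos_add, Real.sin_add] at hα₁ hα₂
  rw [Real.cos_sub, Real.sin_sub] at hβ₁ hβ₂
  refine ⟨2 * b, 2 * a, ?_⟩
  have ha : 2 * a / 2 = a := by ring
  have hb : 2 * b / 2 = b := by ring
  ext i
  fin_cases i <;> simp [kron, Ry, Matrix.mulVec, dotProduct, Fin.sum_univ_four, ha, hb]
  · linear_combination (hα₁ + hβ₁) / 2
  · linear_combination (hα₂ - hβ₂) / 2
  · linear_combination (hα₂ + hβ₂) / 2
  · linear_combination (hβ₁ - hα₁) / 2

theorem stmt_15 (w w' : Fin 4 → ℝ)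
    (hw : w 0 ^ 2 + w 1 ^ 2 + w 2 ^ 2 + w 3 ^ 2 = 1)
    (hw' : w' 0 ^ 2 + w' 1 ^ 2 + w' 2 ^ 2 + w' 3 ^ 2 = 1) :
    ∃ θ₀ θ₁ θ₂ θ₃ : ℝ,
      (kron (Ry θ₃) (Ry θ₂)).mulVec
        (CZ.mulVec ((kron (Ry θ₁) (Ry θ₀)).mulVec w)) = w' := by
  obtain ⟨p, hp⟩ : ∃ p : ℝ, p ^ 2 = (w 0 - w 3) ^ 2 + (w 1 + w 2) ^ 2 :=
    ⟨_, Real.sq_sqrt (by positivity)⟩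
  -- Up to sign, `p = |z₁|` and `q = |z₂|` for `w`, while `c = √t` and `s = √(1-t)`.
  obtain ⟨q, hq⟩ : ∃ q : ℝ, q ^ 2 = (w 0 + w 3) ^ 2 + (w 2 - w 1) ^ 2 :=
    ⟨_, Real.sq_sqrt (by positivity)⟩
  obtain ⟨c, hc⟩ : ∃ c : ℝ, c ^ 2 = ((w' 0 - w' 3) ^ 2 + (w' 1 + w' 2) ^ 2) / 2 :=
    ⟨_, Real.sq_sqrt (by positivity)⟩
  obtain ⟨s, hs⟩ : ∃ s : ℝ, s ^ 2 = ((w' 0 + w' 3) ^ 2 + (w' 2 - w' 1) ^ 2) / 2 :=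
    ⟨_, Real.sq_sqrt (by positivity)⟩
  have hcs : c ^ 2 + s ^ 2 = 1 := by linear_combination hc + hs + hw'
  have hpq : p ^ 2 + q ^ 2 = 2 := by linear_combination hp + hq + 2 * hw
  -- The vector with `z₁ = p (s + i c)` and `z₂ = q (c + i s)`.
  obtain ⟨θ₀, θ₁, h⟩ := exists_local_rotation w
    ![(p * s + q * c) / 2, (p * c - q * s) / 2, (p * c + q * s) / 2, (q * c - p * s) / 2]
    (by simp; linear_combination -hp - p ^ 2 * hcs)
    (by simp; linear_combination -hq - q ^ 2 * hcs)
  obtain ⟨θ₂, θ₃, h'⟩ := exists_local_rotation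
    ![(p * s + q * c) / 2, (p * c - q * s) / 2, (p * c + q * s) / 2, -((q * c - p * s) / 2)] w'
    (by simp; linear_combination 2 * hc + c ^ 2 * hpq)
    (by simp; linear_combination 2 * hs + s ^ 2 * hpq)
  refine ⟨θ₀, θ₁, θ₂, θ₃, ?_⟩
  rw [h, ← h']
  congr 1
  ext i
  fin_cases i <;> simp [CZ, Matrix.mulVec, dotProduct, Fin.sum_univ_four]
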